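/- Let N ⊆ P ⊆ M_m be unital *-subalgebras. Then D(M_m‖N) ≤ D(M_m‖P) + D(P‖N), where D(P‖N) = sup{D(ρ‖N) : ρ a density in P}. -/

import Mathlib

open scoped ENNReal Classical ComplexOrder
open Matrix

noncomputable section

namespace GJL

variable {n : Type*} [Fintype n] [DecidableEq n]

/-- `Mat n` is the matrix *-algebra with rows and columns indexed by `n`. -/
abbrev Mat (n : Type*) [Fintype n] [DecidableEq n] := Matrix n n ℂ

/-- A density matrix: positive semidefinite with trace one. -/
def IsDensity (ρ : Mat n) : Prop := ρ.PosSemidef ∧ ρ.trace = 1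

/-- The real part of the (matrix) trace. -/
def traceR (A : Mat n) : ℝ := (A.trace).re

/-- Real matrix powers via the continuous functional calculus.  For positive
semidefinite matrices and negative exponents this is the generalized inverse
power on the support, since `(0 : ℝ) ^ r = 0` for `r ≠ 0`. -/
def mpow (A : Mat n) (r : ℝ) : Mat n := cfc (fun x : ℝ => x ^ r) A

/-- Matrix logarithm on the support (`Real.log 0 = 0`). -/
def mlog (A : Mat n) : Mat n := cfc Real.log A

/-- Schatten `p`-norm `(Tr ((x* x)^(p/2)))^(1/p)`. -/
def snorm (p : ℝ) (x : Mat n) : ℝ := (traceR (mpow (xᴴ * x) (p/2))) ^ (1/p)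

/-- Operator norm `‖x‖_∞`. -/
def opNorm (x : Mat n) : ℝ := ‖(Matrix.toEuclideanCLM (𝕜 := ℂ) x : EuclideanSpace ℂ n →L[ℂ] EuclideanSpace ℂ n)‖

/-- The support projection of `ρ` is dominated by that of `σ` (for positive
semidefinite matrices: `ker σ ⊆ ker ρ`). -/
def suppLe (ρ σ : Mat n) : Prop := ∀ v, σ.mulVec v = 0 → ρ.mulVec v = 0

/-- `e` is the support projection of `ρ`. -/
def IsSupportProj (ρ e : Mat n) : Prop :=
  e.IsHermitian ∧ e * e = e ∧ ∀ v, e.mulVec v = 0 ↔ ρ.mulVec v = 0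

/-- `D_∞(ρ‖σ) = log min {λ ≥ 0 | ρ ≤ λ σ}`, `⊤` if no such `λ` exists. -/
def Dinf (ρ σ : Mat n) : EReal :=
  if ∃ c : ℝ, 0 ≤ c ∧ (c • σ - ρ).PosSemidef then
    ((Real.log (sInf {c : ℝ | 0 ≤ c ∧ (c • σ - ρ).PosSemidef}) : ℝ) : EReal)
  else ⊤

/-- Umegaki relative entropy `D(ρ‖σ) = Tr(ρ log ρ - ρ log σ)`, `⊤` if the
support condition fails. -/
def DU (ρ σ : Mat n) : EReal :=
  if suppLe ρ σ then ((traceR (ρ * mlog ρ - ρ * mlog σ) : ℝ) : EReal) else ⊤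

/-- The sandwiched matrix `σ^{(1-p)/(2p)} ρ σ^{(1-p)/(2p)}`; note that for
`p > 1` the exponent `(1-p)/(2p)` equals `-1/(2p')` with `1/p + 1/p' = 1`. -/
def sandwich (p : ℝ) (ρ σ : Mat n) : Mat n :=
  mpow σ ((1 - p)/(2*p)) * ρ * mpow σ ((1 - p)/(2*p))

/-- The sandwiched Rényi relative entropy `D_p(ρ‖σ)` for `p ∈ [1/2, ∞]`:
for `p ∈ (1,∞)` it is `p' log ‖σ^{-1/(2p')} ρ σ^{-1/(2p')}‖_p
= (p-1)⁻¹ log Tr ((σ^{-1/(2p')} ρ σ^{-1/(2p')})^p)` when the support of `ρ` is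
dominated by that of `σ` and `⊤` otherwise; for `p ∈ [1/2, 1)` it is
`(p-1)⁻¹ log Tr ((σ^{(1-p)/(2p)} ρ σ^{(1-p)/(2p)})^p)` (`⊤` when the trace
vanishes, i.e. when the honest value is `+∞`); `D_1` is the Umegaki relative
entropy and `D_∞` the max-relative entropy. -/
def Dp (p : ℝ≥0∞) (ρ σ : Mat n) : EReal :=
  if p = ⊤ then Dinf ρ σ
  else if p = 1 then DU ρ σ
  else if 1 < p.toReal ∧ ¬ suppLe ρ σ then ⊤
  else if traceR (mpow (sandwich p.toReal ρ σ) p.toReal) = 0 then ⊤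
  else (((p.toReal - 1)⁻¹ * Real.log (traceR (mpow (sandwich p.toReal ρ σ) p.toReal)) : ℝ) : EReal)

/-- `D_p(ρ‖S) = inf { D_p(ρ‖σ) | σ a density in S }`. -/
def DpSet (p : ℝ≥0∞) (ρ : Mat n) (S : Set (Mat n)) : EReal :=
  ⨅ σ ∈ {σ ∈ S | IsDensity σ}, Dp p ρ σ

/-- `D_p(A‖S) = sup { D_p(ρ‖S) | ρ a density in A }`. -/
def DpRel (p : ℝ≥0∞) (A S : Set (Mat n)) : EReal :=
  ⨆ ρ ∈ {ρ ∈ A | IsDensity ρ}, DpSet p ρ S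

open scoped Kronecker in
/-- The algebraic tensor product `N₁ ⊗ N₂ ⊆ M_{n₁} ⊗ M_{n₂} = M_{n₁ × n₂}`,
realized as the linear span of Kronecker products. -/
def tensorSpan {n₁ n₂ : Type*} [Fintype n₁] [DecidableEq n₁] [Fintype n₂] [DecidableEq n₂]
    (N₁ : Set (Mat n₁)) (N₂ : Set (Mat n₂)) : Set (Mat (n₁ × n₂)) :=
  ↑(Submodule.span ℂ {z : Mat (n₁ × n₂) | ∃ x ∈ N₁, ∃ y ∈ N₂, z = x ⊗ₖ y})

/-- `D_{p,cb}(M‖N) = sup_k D_p(M_k ⊗ M ‖ M_k ⊗ N)`. -/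
def DpCb (p : ℝ≥0∞) (N : Set (Mat n)) : EReal :=
  ⨆ k : ℕ, DpRel p Set.univ (tensorSpan (Set.univ : Set (Mat (Fin k))) N)

/-- `E` is the trace preserving conditional expectation onto `N`, i.e. the
orthogonal projection onto `N` with respect to the Hilbert–Schmidt inner
product `⟨x,y⟩ = Tr(x* y)`. -/
def IsCondExp (N : Set (Mat n)) (E : Mat n →ₗ[ℂ] Mat n) : Prop :=
  (∀ x, E x ∈ N) ∧ (∀ x ∈ N, E x = x) ∧
    ∀ x y, y ∈ N → ((E x)ᴴ * y).trace = (xᴴ * y).trace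

/-- The Pimsner–Popa index constant
`λ(M:N) = max {c ≥ 0 | c x ≤ E(x) for all x ≥ 0}`. -/
def ppIndex (E : Mat n →ₗ[ℂ] Mat n) : ℝ :=
  sSup {c : ℝ | 0 ≤ c ∧ ∀ x : Mat n, x.PosSemidef → (E x - c • x).PosSemidef}

/-- von Neumann entropy `H(ρ) = -Tr(ρ log ρ)`. -/
def vnEntropy (ρ : Mat n) : ℝ := - traceR (ρ * mlog ρ)

/-- The amplification `id_{M_k} ⊗ Φ` acting on `M_k ⊗ M_n = M_{k × n}`,
applying `Φ` blockwise. -/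
def ampFun (k : Type*) [Fintype k] [DecidableEq k] (Φ : Mat n →ₗ[ℂ] Mat n)
    (X : Mat (k × n)) : Mat (k × n) :=
  Matrix.of fun a b => Φ (Matrix.of fun s t => X (a.1, s) (b.1, t)) a.2 b.2

/-- Complete positivity: all amplifications `id_{M_k} ⊗ Φ` preserve positive
semidefiniteness. -/
def IsCP (Φ : Mat n →ₗ[ℂ] Mat n) : Prop :=
  ∀ (k : ℕ) (X : Mat (Fin k × n)), X.PosSemidef → (ampFun (Fin k) Φ X).PosSemidef

/-- Completely positive and trace preserving. -/
def IsCPTP (Φ : Mat n →ₗ[ℂ] Mat n) : Prop :=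
  IsCP Φ ∧ ∀ x : Mat n, (Φ x).trace = x.trace

/-!
Let `E` be the trace-preserving conditional expectation onto `P`. For a density `ρ` and a density
`σ ∈ P` the matrix `log σ` lies in `P`, so `Tr (ρ log σ) = Tr (E(ρ) log σ)`; this gives the
Pythagorean identity `D(ρ‖σ) = D(ρ‖E(ρ)) + D(E(ρ)‖σ)`. By Klein's inequality the last term is
nonnegative, hence `D(ρ‖P) = D(ρ‖E(ρ))`. Taking the infimum over `σ ∈ N` yields
`D(ρ‖N) ≤ D(ρ‖P) + D(E(ρ)‖N)`, where `E(ρ)` is a density in `P`.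
-/

theorem cfc_mul_cfc (A : Mat n) (f g : ℝ → ℝ) :
    cfc f A * cfc g A = cfc (fun x => f x * g x) A :=
  (cfc_mul f g A (A.finite_real_spectrum.continuousOn _)
    (A.finite_real_spectrum.continuousOn _)).symm

instance isClosed_starSubalgebra (P : StarSubalgebra ℂ (Mat n)) : IsClosed (P : Set (Mat n)) :=
  P.toSubalgebra.toSubmodule.closed_of_finiteDimensional

open scoped MatrixOrder in
theorem trace_mul_nonneg_of_posSemidef {A B : Mat n} (hA : A.PosSemidef) (hB : B.PosSemidef) :
    0 ≤ (A * B).trace := by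
  obtain ⟨C, hC⟩ := CStarAlgebra.nonneg_iff_eq_star_mul_self.1 hB.nonneg
  rw [hC, ← mul_assoc, trace_mul_comm, ← mul_assoc]
  exact (hA.mul_mul_conjTranspose_same C).trace_nonneg

namespace IsSupportProj

variable {ρ σ e : Mat n}

theorem suppLe_iff_mul_eq (he : IsSupportProj σ e) : suppLe ρ σ ↔ ρ * e = ρ := by
  obtain ⟨-, he_idem, he_ker⟩ := he
  refine ⟨fun h => ext_of_mulVec_single fun i => ?_, fun h v hv => ?_⟩
  · have hker : σ *ᵥ (Pi.single i 1 - e *ᵥ Pi.single i 1) = 0 := by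
      rw [← he_ker, mulVec_sub, mulVec_mulVec, he_idem, sub_self]
    rw [← mulVec_mulVec, eq_comm, ← sub_eq_zero, ← mulVec_sub, h _ hker]
  · rw [← h, ← mulVec_mulVec, (he_ker v).2 hv, mulVec_zero]

theorem suppLe_iff_trace_mul_eq (he : IsSupportProj σ e) (hρ : ρ.PosSemidef) :
    suppLe ρ σ ↔ (ρ * e).trace = ρ.trace := by
  rw [he.suppLe_iff_mul_eq]
  refine ⟨congrArg trace, fun h => ?_⟩
  obtain ⟨he_herm, he_idem, -⟩ := he
  have hcompl_idem : (1 - e) * (1 - e) = 1 - e := IsIdempotentElem.one_sub he_idem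
  have hcompl_trace : ((1 - e)ᴴ * ρ * (1 - e)).trace = 0 := by
    rw [(isHermitian_one.sub he_herm).eq, trace_mul_comm, ← mul_assoc, hcompl_idem,
      trace_mul_comm, mul_sub, mul_one, trace_sub, h, sub_self]
  have hcompl : (1 - e)ᴴ * ρ * (1 - e) = 0 :=
    (hρ.conjTranspose_mul_mul_same _).trace_eq_zero_iff.1 hcompl_trace
  have hzero : ρ * (1 - e) = 0 := by
    refine ext_of_mulVec_single fun i => ?_
    rw [zero_mulVec, ← mulVec_mulVec, ← hρ.dotProduct_mulVec_zero_iff, star_mulVec,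
      ← dotProduct_mulVec, mulVec_mulVec, mulVec_mulVec, hcompl, zero_mulVec, dotProduct_zero]
  rwa [mul_sub, mul_one, sub_eq_zero, eq_comm] at hzero

end IsSupportProj

/-- The support projection of a Hermitian matrix `A`: the spectral projection of `A` onto
`{x | x ≠ 0}`, so that it lies in every *-subalgebra containing `A`. -/
def suppProj (A : Mat n) : Mat n := cfc (fun x : ℝ => if x = 0 then 0 else 1) A

theorem isSupportProj_suppProj {A : Mat n} (hA : A.IsHermitian) :
    IsSupportProj A (suppProj A) := by
  have hA_id : cfc (fun x : ℝ => x) A = A := cfc_id' ℝ A hA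
  have hidem : suppProj A * suppProj A = suppProj A := by
    rw [suppProj, cfc_mul_cfc]
    congr! 2 with x
    split_ifs <;> simp
  have hmul : A * suppProj A = A := by
    nth_rw 1 3 [← hA_id]
    rw [suppProj, cfc_mul_cfc]
    congr! 2 with x
    split_ifs with hx <;> simp [hx]
  have hinv : cfc (fun x : ℝ => x⁻¹) A * A = suppProj A := by
    nth_rw 2 [← hA_id]
    rw [suppProj, cfc_mul_cfc]
    congr! 2 with x
    split_ifs with hx <;> simp [hx]
  refine ⟨cfc_predicate (p := IsSelfAdjoint) _ A, hidem, fun v => ⟨fun hv => ?_, fun hv => ?_⟩⟩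
  · rw [← hmul, ← mulVec_mulVec, hv, mulVec_zero]
  · rw [← hinv, ← mulVec_mulVec, hv, mulVec_zero]

theorem traceR_sub (A B : Mat n) : traceR (A - B) = traceR A - traceR B := by
  simp only [traceR, trace_sub, Complex.sub_re]

theorem traceR_neg (A : Mat n) : traceR (-A) = -traceR A := by
  simp only [traceR, trace_neg, Complex.neg_re]

theorem traceR_mul_comm (A B : Mat n) : traceR (A * B) = traceR (B * A) :=
  congrArg Complex.re (trace_mul_comm A B)

theorem traceR_cfc_mul_cfc {A B : Mat n} (hA : A.IsHermitian) (hB : B.IsHermitian)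
    (f g : ℝ → ℝ) :
    traceR (cfc f A * cfc g B) = ∑ i, ∑ j, f (hA.eigenvalues i) * g (hB.eigenvalues j) *
      Complex.normSq ((star (hA.eigenvectorUnitary : Mat n) * hB.eigenvectorUnitary) i j) := by
  set U : Mat n := ↑hA.eigenvectorUnitary
  set V : Mat n := ↑hB.eigenvectorUnitary
  have htrace : traceR (cfc f A * cfc g B) =
      traceR (diagonal (fun i => (f (hA.eigenvalues i) : ℂ)) *
        ((star U * V) * diagonal (fun j => (g (hB.eigenvalues j) : ℂ)) * star (star U * V))) := by
    rw [hA.cfc_eq, hB.cfc_eq, IsHermitian.cfc, IsHermitian.cfc, Unitary.conjStarAlgAut_apply,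
      Unitary.conjStarAlgAut_apply, traceR, mul_assoc, mul_assoc, trace_mul_comm]
    simp only [star_mul, star_star, mul_assoc]
    rfl
  rw [htrace, traceR, trace, Complex.re_sum]
  refine Finset.sum_congr rfl fun i _ => ?_
  rw [diag_apply, diagonal_mul, mul_apply, Finset.mul_sum, Complex.re_sum]
  refine Finset.sum_congr rfl fun j _ => ?_
  rw [mul_diagonal, star_apply, mul_right_comm, RCLike.star_def, Complex.mul_conj, mul_left_comm,
    ← mul_assoc]
  norm_cast
  ring

theorem sum_traceR_cfc_mul_cfc_nonneg {ι : Type*} [Fintype ι] {A B : Mat n} (hA : A.IsHermitian)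
    (hB : B.IsHermitian) (f g : ι → ℝ → ℝ)
    (h : ∀ a ∈ spectrum ℝ A, ∀ b ∈ spectrum ℝ B, 0 ≤ ∑ k, f k a * g k b) :
    0 ≤ ∑ k, traceR (cfc (f k) A * cfc (g k) B) := by
  simp only [traceR_cfc_mul_cfc hA hB]
  rw [Finset.sum_comm]
  refine Finset.sum_nonneg fun i _ => ?_
  rw [Finset.sum_comm]
  refine Finset.sum_nonneg fun j _ => ?_
  rw [← Finset.sum_mul]
  exact mul_nonneg (h _ (hA.eigenvalues_mem_spectrum_real i) _ (hB.eigenvalues_mem_spectrum_real j))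
    (Complex.normSq_nonneg _)

theorem sub_le_mul_log_sub_mul_log {a b : ℝ} (ha : 0 ≤ a) (hb : 0 < b) :
    a - b ≤ a * Real.log a - a * Real.log b := by
  rcases ha.eq_or_lt with rfl | ha
  · simpa using hb.le
  have h := mul_nonneg hb.le (InformationTheory.klFun_nonneg (div_nonneg ha.le hb.le))
  rw [InformationTheory.klFun_apply, Real.log_div ha.ne' hb.ne'] at h
  field_simp at h
  linarith

-- Since `Real.log 0 = 0`, the inequality `a - b ≤ a * log a - a * log b` can fail at `b = 0`;
-- `suppProj σ` removes the terms `a` and `a * log a` there.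
open scoped MatrixOrder in
theorem traceR_mul_suppProj_sub_le {ρ σ : Mat n} (hρ : ρ.PosSemidef) (hσ : σ.PosSemidef) :
    traceR (ρ * suppProj σ) - traceR σ ≤
      traceR (mlog ρ * ρ * suppProj σ) - traceR (ρ * mlog σ) := by
  have hρ_id : cfc (fun a : ℝ => a) ρ = ρ := cfc_id' ℝ ρ hρ.1
  have hσ_id : cfc (fun b : ℝ => b) σ = σ := cfc_id' ℝ σ hσ.1
  have hρ_one : cfc (fun _ : ℝ => (1 : ℝ)) ρ = 1 := cfc_const_one ℝ ρ hρ.1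
  have hρ_neg : cfc (fun a : ℝ => -a) ρ = -ρ := by rw [cfc_neg, hρ_id]
  have hρ_log : cfc (fun a => Real.log a * a) ρ = mlog ρ * ρ := by
    rw [← cfc_mul_cfc, hρ_id, mlog]
  let f : Fin 4 → ℝ → ℝ := ![fun a => Real.log a * a, fun a => -a, fun a => -a, fun _ => 1]
  let g : Fin 4 → ℝ → ℝ :=
    ![fun b => if b = 0 then 0 else 1, fun b => if b = 0 then 0 else 1, Real.log, fun b => b]
  have hscalar : ∀ a ∈ spectrum ℝ ρ, ∀ b ∈ spectrum ℝ σ, 0 ≤ ∑ k, f k a * g k b := by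
    intro a ha b hb
    have ha_nonneg : 0 ≤ a := spectrum_nonneg_of_nonneg hρ.nonneg ha
    have hb_nonneg : 0 ≤ b := spectrum_nonneg_of_nonneg hσ.nonneg hb
    rcases hb_nonneg.eq_or_lt with rfl | hb_pos
    · simp [f, g, Fin.sum_univ_four]
    · have h := sub_le_mul_log_sub_mul_log ha_nonneg hb_pos
      simp only [f, g, Fin.sum_univ_four, cons_val, hb_pos.ne', if_false]
      linarith
  have h := sum_traceR_cfc_mul_cfc_nonneg hρ.1 hσ.1 f g hscalar
  simp only [f, g, Fin.sum_univ_four, cons_val, hρ_log, hρ_neg, hρ_one, hσ_id, one_mul, neg_mul,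
    traceR_neg] at h
  rw [suppProj, mlog.eq_def σ]
  linarith

theorem traceR_sub_le_of_suppLe {ρ σ : Mat n} (hρ : ρ.PosSemidef) (hσ : σ.PosSemidef)
    (h : suppLe ρ σ) : traceR ρ - traceR σ ≤ traceR (ρ * mlog ρ - ρ * mlog σ) := by
  have hρ_supp : ρ * suppProj σ = ρ := (isSupportProj_suppProj hσ.1).suppLe_iff_mul_eq.1 h
  have hklein := traceR_mul_suppProj_sub_le hρ hσ
  rwa [mul_assoc, hρ_supp, traceR_mul_comm (mlog ρ), ← traceR_sub (ρ * mlog ρ)] at hklein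

theorem DU_of_suppLe {ρ σ : Mat n} (h : suppLe ρ σ) :
    DU ρ σ = ↑(traceR (ρ * mlog ρ) - traceR (ρ * mlog σ)) := by
  rw [DU, if_pos h, traceR_sub]

theorem DU_of_not_suppLe {ρ σ : Mat n} (h : ¬suppLe ρ σ) : DU ρ σ = ⊤ := if_neg h

theorem DU_nonneg {ρ σ : Mat n} (hρ : IsDensity ρ) (hσ : IsDensity σ) : 0 ≤ DU ρ σ := by
  by_cases h : suppLe ρ σ
  · have hklein := traceR_sub_le_of_suppLe hρ.1 hσ.1 h
    rw [traceR, traceR, hρ.2, hσ.2, sub_self] at hklein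
    rw [DU, if_pos h]
    exact EReal.coe_nonneg.2 hklein
  · exact DU_of_not_suppLe h ▸ le_top

theorem Dp_one (ρ σ : Mat n) : Dp 1 ρ σ = DU ρ σ := by
  rw [Dp, if_neg ENNReal.one_ne_top, if_pos rfl]

theorem exists_isCondExp (V : Submodule ℂ (Mat n)) :
    ∃ E, IsCondExp (V : Set (Mat n)) E := by
  let _ : NormedAddCommGroup (Mat n) := toMatrixNormedAddCommGroup 1 .one
  let _ : InnerProductSpace ℂ (Mat n) := toMatrixInnerProductSpace 1 .one
  have hinner (x y : Mat n) : inner ℂ x y = (xᴴ * y).trace :=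
    calc inner ℂ x y = (y * 1 * xᴴ).trace := rfl
      _ = (xᴴ * y).trace := by rw [mul_one, trace_mul_comm]
  have hV : IsCompl V Vᗮ := V.isCompl_orthogonal
  refine ⟨V.projection Vᗮ hV, V.projection_apply_mem hV,
    fun x hx => (Submodule.projection_eq_self_iff hV x).2 hx, fun x y hy => ?_⟩
  have horth : inner ℂ (x - V.projection Vᗮ hV x) y = 0 :=
    V.inner_left_of_mem_orthogonal hy (Submodule.sub_projection_mem hV x)
  rw [← hinner, ← hinner, ← sub_eq_zero, ← neg_eq_zero, neg_sub, ← inner_sub_left, horth]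

namespace IsCondExp

variable {P : StarSubalgebra ℂ (Mat n)} {E : Mat n →ₗ[ℂ] Mat n} {x y ρ σ : Mat n}

theorem trace_apply_mul (hE : IsCondExp (P : Set (Mat n)) E) (x : Mat n) (hy : y ∈ P) :
    (E x * y).trace = (x * y).trace := by
  have h := congrArg star (hE.2.2 x yᴴ (star_mem hy))
  simpa only [← trace_conjTranspose, conjTranspose_mul, conjTranspose_conjTranspose,
    trace_mul_comm y] using h

theorem trace_apply (hE : IsCondExp (P : Set (Mat n)) E) (x : Mat n) :
    (E x).trace = x.trace := by
  simpa only [mul_one] using hE.trace_apply_mul x (one_mem P)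

theorem isHermitian_apply (hE : IsCondExp (P : Set (Mat n)) E) (hx : x.IsHermitian) :
    (E x).IsHermitian := by
  set z := (E x)ᴴ - E x with hz
  have hzP : zᴴ ∈ P := star_mem (sub_mem (star_mem (hE.1 x)) (hE.1 x))
  have hz_trace : (z * zᴴ).trace = 0 := by
    rw [hz, sub_mul, ← hz, trace_sub, hE.2.2 x _ hzP, hE.trace_apply_mul x hzP, hx.eq, sub_self]
  exact sub_eq_zero.1 (trace_mul_conjTranspose_self_eq_zero_iff.1 hz_trace)

open scoped MatrixOrder in
theorem posSemidef_apply (hE : IsCondExp (P : Set (Mat n)) E) (hx : x.PosSemidef) :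
    (E x).PosSemidef := by
  have hEx : IsSelfAdjoint (E x) := hE.isHermitian_apply hx.1
  have hneg : (E x)⁻.PosSemidef := (CFC.negPart_nonneg (E x)).posSemidef
  have hneg_mem : (E x)⁻ ∈ P := cfcₙ_mem (𝕜' := ℂ) _ (hE.1 x)
  have hmul : E x * (E x)⁻ = -((E x)⁻ᴴ * (E x)⁻) := by
    nth_rw 1 [← CFC.posPart_sub_negPart (E x) hEx]
    rw [sub_mul, CFC.posPart_mul_negPart, zero_sub, hneg.1.eq]
  have hle : ((E x)⁻ᴴ * (E x)⁻).trace ≤ 0 := by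
    rw [← neg_nonneg, ← trace_neg, ← hmul, hE.trace_apply_mul x hneg_mem]
    exact trace_mul_nonneg_of_posSemidef hx hneg
  have hzero : (E x)⁻ = 0 := trace_conjTranspose_mul_self_eq_zero_iff.1
    (hle.antisymm (posSemidef_conjTranspose_mul_self _).trace_nonneg)
  exact ((CFC.negPart_eq_zero_iff (E x) hEx).1 hzero).posSemidef

theorem isDensity_apply (hE : IsCondExp (P : Set (Mat n)) E) (hρ : IsDensity ρ) :
    IsDensity (E ρ) :=
  ⟨hE.posSemidef_apply hρ.1, (hE.trace_apply ρ).trans hρ.2⟩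

theorem suppLe_apply_iff (hE : IsCondExp (P : Set (Mat n)) E) (hρ : ρ.PosSemidef)
    (hσ : σ.IsHermitian) (hσP : σ ∈ P) : suppLe (E ρ) σ ↔ suppLe ρ σ := by
  have he := isSupportProj_suppProj hσ
  have heP : suppProj σ ∈ P := cfc_mem (𝕜' := ℂ) _ hσP
  rw [he.suppLe_iff_trace_mul_eq (hE.posSemidef_apply hρ), he.suppLe_iff_trace_mul_eq hρ,
    hE.trace_apply_mul ρ heP, hE.trace_apply]

theorem suppLe_apply (hE : IsCondExp (P : Set (Mat n)) E) (hρ : ρ.PosSemidef) :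
    suppLe ρ (E ρ) :=
  (hE.suppLe_apply_iff hρ (hE.isHermitian_apply hρ.1) (hE.1 ρ)).1 fun _ => id

theorem traceR_apply_mul_mlog (hE : IsCondExp (P : Set (Mat n)) E) (ρ : Mat n) (hσ : σ ∈ P) :
    traceR (E ρ * mlog σ) = traceR (ρ * mlog σ) :=
  congrArg Complex.re (hE.trace_apply_mul ρ (cfc_mem (𝕜' := ℂ) _ hσ))

theorem DU_eq_add (hE : IsCondExp (P : Set (Mat n)) E) (hρ : ρ.PosSemidef) (hσ : σ.IsHermitian)
    (hσP : σ ∈ P) : DU ρ σ = DU ρ (E ρ) + DU (E ρ) σ := by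
  rw [DU_of_suppLe (hE.suppLe_apply hρ)]
  by_cases h : suppLe ρ σ
  · rw [DU_of_suppLe h, DU_of_suppLe ((hE.suppLe_apply_iff hρ hσ hσP).2 h), ← EReal.coe_add,
      hE.traceR_apply_mul_mlog ρ hσP, hE.traceR_apply_mul_mlog ρ (hE.1 ρ), sub_add_sub_cancel]
  · rw [DU_of_not_suppLe h, DU_of_not_suppLe (mt (hE.suppLe_apply_iff hρ hσ hσP).1 h),
      EReal.coe_add_top]

theorem DpSet_one_eq (hE : IsCondExp (P : Set (Mat n)) E) (hρ : IsDensity ρ) :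
    DpSet 1 ρ P = DU ρ (E ρ) := by
  have hEρ := hE.isDensity_apply hρ
  refine le_antisymm ((iInf₂_le (E ρ) ⟨hE.1 ρ, hEρ⟩).trans_eq (Dp_one ρ _))
    (le_iInf₂ fun σ hσ => ?_)
  rw [Dp_one, hE.DU_eq_add hρ.1 hσ.2.1.1 hσ.1]
  exact le_add_of_nonneg_right (DU_nonneg hEρ hσ.2)

theorem DpSet_one_le_add (hE : IsCondExp (P : Set (Mat n)) E) {S : Set (Mat n)}
    (hS : S ⊆ P) (hρ : IsDensity ρ) :
    DpSet 1 ρ S ≤ DpSet 1 ρ P + DpSet 1 (E ρ) S := by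
  rw [hE.DpSet_one_eq hρ, DU_of_suppLe (hE.suppLe_apply hρ.1), add_comm,
    ← EReal.sub_le_iff_le_add (.inl (EReal.coe_ne_bot _)) (.inl (EReal.coe_ne_top _))]
  refine le_iInf₂ fun σ hσ => EReal.sub_le_of_le_add' ((iInf₂_le σ hσ).trans_eq ?_)
  rw [Dp_one, Dp_one, hE.DU_eq_add hρ.1 hσ.2.1.1 (hS hσ.1), DU_of_suppLe (hE.suppLe_apply hρ.1)]

end IsCondExp

theorem statement8_general (P : StarSubalgebra ℂ (Mat n)) {A S : Set (Mat n)} (hS : S ⊆ P) :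
    DpRel 1 A S ≤ DpRel 1 A P + DpRel 1 P S := by
  obtain ⟨E, hE⟩ : ∃ E, IsCondExp (P : Set (Mat n)) E :=
    exists_isCondExp P.toSubalgebra.toSubmodule
  refine iSup₂_le fun ρ hρ => ?_
  calc DpSet 1 ρ S
      ≤ DpSet 1 ρ P + DpSet 1 (E ρ) S := hE.DpSet_one_le_add hS hρ.2
    _ ≤ DpRel 1 A P + DpRel 1 P S :=
        add_le_add (le_biSup (DpSet 1 · (P : Set (Mat n))) hρ)
          (le_biSup (DpSet 1 · S) ⟨hE.1 ρ, hE.isDensity_apply hρ.2⟩)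

/-- for nested unital *-subalgebras `N ⊆ P ⊆ M_m`,
`D(M_m‖N) ≤ D(M_m‖P) + D(P‖N)`. -/
theorem statement8 {m : ℕ} (N P : StarSubalgebra ℂ (Mat (Fin m)))
    (hNP : (N : Set (Mat (Fin m))) ⊆ (P : Set (Mat (Fin m)))) :
    DpRel 1 Set.univ (N : Set (Mat (Fin m))) ≤
      DpRel 1 Set.univ (P : Set (Mat (Fin m)))
        + DpRel 1 (P : Set (Mat (Fin m))) (N : Set (Mat (Fin m))) :=
  statement8_general P hNP

end GJL
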